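/- arXiv:2409.08714 — 3 statements merged into one kernel-verified Lean document; each statement's English description precedes it below -/
import Mathlib

section
/- Fix k > 0, c > 0, r0 < 0, and let L = 2π/k. Let ξ : ℝ → ℝ be continuous and L-periodic with ξ(q) ≤ k·r0 < 0 for all q, and let θ(q) = k(q − c·t) for a fixed t. If 0 < c0 < c·e^{2k·r0}, then the mean Eulerian velocity ⟨u⟩_E := −(c/L)·∫₀^L e^{2ξ(q)} dq − (c0/L)·∫₀^L (1 − e^{2ξ(q)}) / (1 + e^{ξ(q)}·cos θ(q)) dq lies in the open interval ( −c·(1 − e^{3k·r0})/(1 − e^{k·r0}), 0 ). -/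
/-!
The mean velocity is the average over a wavelength of `-c e^{2ξ} - c₀ J`, where
`J = (1 - e^{2ξ}) / (1 + e^ξ cos θ)`. Since `1 - e^{2ξ} = (1 - e^ξ)(1 + e^ξ)` and
`1 - e^ξ ≤ 1 + e^ξ cos θ`, one has `0 < J ≤ 1 + e^ξ`. For `ξ ≤ b < 0` and `0 ≤ c₀ < c` the averaged
function therefore takes its values strictly between `-c (1 + e^b + e^{2b})`, a geometric sum, and
`0`, and the average of a function with values in an interval stays in that interval.
-/

open MeasureTheory Real Set

theorem average_mem_of_ordConnected {α : Type*} [MeasurableSpace α] {μ : Measure α}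
    [IsFiniteMeasure μ] [NeZero μ] {f : α → ℝ} {s : Set ℝ} (hs : s.OrdConnected)
    (hf : Integrable f μ) (hfs : ∀ᵐ x ∂μ, f x ∈ s) : ⨍ x, f x ∂μ ∈ s := by
  obtain ⟨x, hx, hx_le⟩ := exists_notMem_null_le_average (NeZero.ne μ) hf hfs
  obtain ⟨y, hy, le_hy⟩ := exists_notMem_null_average_le (NeZero.ne μ) hf hfs
  exact hs.out (not_not.mp hx) (not_not.mp hy) ⟨hx_le, le_hy⟩

theorem one_sub_exp_three_mul_div {b : ℝ} (hb : b ≠ 0) :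
    (1 - exp (3 * b)) / (1 - exp b) = 1 + exp b + exp (2 * b) := by
  have hne : 1 - exp b ≠ 0 := sub_ne_zero.mpr fun h => hb (exp_eq_one_iff b |>.mp h.symm)
  have h_three : exp (3 * b) = exp b ^ 3 := exp_nat_mul b 3
  have h_two : exp (2 * b) = exp b ^ 2 := exp_nat_mul b 2
  rw [div_eq_iff hne, h_three, h_two]
  ring

/-- The derivative `dx/dq` of the horizontal position with respect to the Lagrangian label `q` along
a curve of fixed depth, as a function of the decay exponent `ξ` and the phase `θ`; it is the weight
that turns an average over positions into one over labels. -/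
noncomputable def horizontalStretch (ξ θ : ℝ) : ℝ :=
  (1 - exp (2 * ξ)) / (1 + exp ξ * cos θ)

theorem one_sub_exp_le_one_add_exp_mul_cos (ξ θ : ℝ) : 1 - exp ξ ≤ 1 + exp ξ * cos θ := by
  have := mul_le_mul_of_nonneg_left (neg_one_le_cos θ) (exp_pos ξ).le
  linarith

section Pointwise

variable {ξ : ℝ} (θ : ℝ)

theorem one_add_exp_mul_cos_pos (hξ : ξ < 0) : 0 < 1 + exp ξ * cos θ :=
  (sub_pos.mpr (exp_lt_one_iff.mpr hξ)).trans_le (one_sub_exp_le_one_add_exp_mul_cos ξ θ)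

theorem horizontalStretch_pos (hξ : ξ < 0) : 0 < horizontalStretch ξ θ :=
  div_pos (sub_pos.mpr (exp_lt_one_iff.mpr (by linarith))) (one_add_exp_mul_cos_pos θ hξ)

theorem horizontalStretch_le (hξ : ξ < 0) : horizontalStretch ξ θ ≤ 1 + exp ξ := by
  rw [horizontalStretch, div_le_iff₀ (one_add_exp_mul_cos_pos θ hξ)]
  calc
    1 - exp (2 * ξ) = (1 + exp ξ) * (1 - exp ξ) := by rw [two_mul, exp_add]; ring
    _ ≤ (1 + exp ξ) * (1 + exp ξ * cos θ) := by
      gcongr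
      exact one_sub_exp_le_one_add_exp_mul_cos ξ θ

theorem neg_mul_exp_sub_mul_horizontalStretch_mem_Ioo {b c c0 : ℝ} (hb : b < 0) (hξ : ξ ≤ b)
    (hc0 : 0 ≤ c0) (hc : c0 < c) :
    -(c * exp (2 * ξ)) - c0 * horizontalStretch ξ θ ∈
      Ioo (-(c * (1 + exp b + exp (2 * b)))) 0 := by
  have hc_pos : 0 < c := hc0.trans_lt hc
  have hξ_neg : ξ < 0 := hξ.trans_lt hb
  have h_exp_pos : 0 < c * exp (2 * ξ) := by positivity
  have h_exp_le : c * exp (2 * ξ) ≤ c * exp (2 * b) := by gcongr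
  have h_stretch_nonneg : 0 ≤ c0 * horizontalStretch ξ θ :=
    mul_nonneg hc0 (horizontalStretch_pos θ hξ_neg).le
  have h_stretch_lt : c0 * horizontalStretch ξ θ < c * (1 + exp b) := by
    calc
      c0 * horizontalStretch ξ θ ≤ c0 * (1 + exp ξ) := by
        gcongr
        exact horizontalStretch_le θ hξ_neg
      _ ≤ c0 * (1 + exp b) := by gcongr
      _ < c * (1 + exp b) := by gcongr
  constructor <;> linarith

end Pointwise

section Average

variable {α : Type*} [MeasurableSpace α] {μ : Measure α} {ξ θ : α → ℝ}

theorem integrable_exp_of_ae_le [IsFiniteMeasure μ] {f : α → ℝ} {B : ℝ} (hf : AEMeasurable f μ)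
    (hfB : ∀ᵐ x ∂μ, f x ≤ B) : Integrable (fun x => exp (f x)) μ :=
  .of_mem_Icc 0 (exp B) hf.exp (hfB.mono fun _ hx => ⟨(exp_pos _).le, exp_le_exp.mpr hx⟩)

theorem integrable_horizontalStretch [IsFiniteMeasure μ] (hξ : AEMeasurable ξ μ)
    (hθ : AEMeasurable θ μ) (hξ_neg : ∀ᵐ x ∂μ, ξ x < 0) :
    Integrable (fun x => horizontalStretch (ξ x) (θ x)) μ := by
  have h_meas : AEMeasurable (fun x => horizontalStretch (ξ x) (θ x)) μ := by
    unfold horizontalStretch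
    fun_prop
  refine .of_mem_Icc 0 2 h_meas (hξ_neg.mono fun x hx => ?_)
  exact ⟨(horizontalStretch_pos _ hx).le,
    (horizontalStretch_le _ hx).trans (by linarith [exp_lt_one_iff.mpr hx])⟩

/-- The mean Eulerian velocity `⟨u⟩_E`, as an average over Lagrangian labels distributed according
to `μ`. The labels form an arbitrary measure space; a wavelength is the case of Lebesgue measure on
an interval. -/
noncomputable def meanEulerianVelocity (μ : Measure α) (c c0 : ℝ) (ξ θ : α → ℝ) : ℝ :=
  -(c * ⨍ x, exp (2 * ξ x) ∂μ) - c0 * ⨍ x, horizontalStretch (ξ x) (θ x) ∂μ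

theorem meanEulerianVelocity_eq_average (c c0 : ℝ)
    (h_exp : Integrable (fun x => exp (2 * ξ x)) μ)
    (h_stretch : Integrable (fun x => horizontalStretch (ξ x) (θ x)) μ) :
    meanEulerianVelocity μ c c0 ξ θ =
      ⨍ x, (-(c * exp (2 * ξ x)) - c0 * horizontalStretch (ξ x) (θ x)) ∂μ := by
  simp only [meanEulerianVelocity, average_eq, smul_eq_mul]
  rw [integral_sub (h_exp.const_mul c).fun_neg (h_stretch.const_mul c0), integral_neg,
    integral_const_mul, integral_const_mul]
  ring

theorem meanEulerianVelocity_mem_Ioo [IsFiniteMeasure μ] [NeZero μ] {b c c0 : ℝ}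
    (hξ : AEMeasurable ξ μ) (hθ : AEMeasurable θ μ) (hb : b < 0) (hξb : ∀ᵐ x ∂μ, ξ x ≤ b)
    (hc0 : 0 ≤ c0) (hc : c0 < c) :
    meanEulerianVelocity μ c c0 ξ θ ∈ Ioo (-(c * (1 + exp b + exp (2 * b)))) 0 := by
  have h_exp : Integrable (fun x => exp (2 * ξ x)) μ :=
    integrable_exp_of_ae_le (B := 2 * b) (hξ.const_mul 2) (hξb.mono fun _ hx => by gcongr)
  have h_stretch : Integrable (fun x => horizontalStretch (ξ x) (θ x)) μ :=
    integrable_horizontalStretch hξ hθ (hξb.mono fun _ hx => hx.trans_lt hb)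
  rw [meanEulerianVelocity_eq_average c c0 h_exp h_stretch]
  exact average_mem_of_ordConnected ordConnected_Ioo
    ((h_exp.const_mul c).neg.sub (h_stretch.const_mul c0))
    (hξb.mono fun x hx => neg_mul_exp_sub_mul_horizontalStretch_mem_Ioo (θ x) hb hx hc0 hc)

end Average

theorem meanEulerianVelocity_restrict_Ioc {L : ℝ} (hL : 0 ≤ L) (c c0 : ℝ) (ξ θ : ℝ → ℝ) :
    meanEulerianVelocity (volume.restrict (Ioc 0 L)) c c0 ξ θ =
      -(c / L) * (∫ q in (0 : ℝ)..L, exp (2 * ξ q)) -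
        (c0 / L) * ∫ q in (0 : ℝ)..L, horizontalStretch (ξ q) (θ q) := by
  rw [meanEulerianVelocity, ← uIoc_of_le hL, interval_average_eq_div, interval_average_eq_div,
    sub_zero]
  ring

theorem stmt9_general {b c c0 L : ℝ} {ξ θ : ℝ → ℝ} (hL : 0 < L)
    (hξ : AEMeasurable ξ (volume.restrict (Ioc 0 L)))
    (hθ : AEMeasurable θ (volume.restrict (Ioc 0 L)))
    (hb : b < 0) (hξb : ∀ᵐ q ∂volume.restrict (Ioc 0 L), ξ q ≤ b) (hc0 : 0 ≤ c0) (hc : c0 < c) :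
    -(c / L) * (∫ q in (0 : ℝ)..L, exp (2 * ξ q)) -
        (c0 / L) * (∫ q in (0 : ℝ)..L, (1 - exp (2 * ξ q)) / (1 + exp (ξ q) * cos (θ q))) ∈
      Ioo (-(c * (1 - exp (3 * b)) / (1 - exp b))) 0 := by
  have : NeZero (volume.restrict (Ioc 0 L)) := ⟨by simp [hL]⟩
  rw [mul_div_assoc, one_sub_exp_three_mul_div hb.ne]
  simpa only [meanEulerianVelocity_restrict_Ioc hL.le, horizontalStretch] using
    meanEulerianVelocity_mem_Ioo hξ hθ hb hξb hc0 hc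

/-- For an adverse current `0 < c0 < c·e^{2k·r0}`, the mean Eulerian flow velocity lies in
the open interval `(−c(1 − e^{3k·r0})/(1 − e^{k·r0}), 0)`. -/
theorem stmt9 (k c c0 t r0 L : ℝ) (hk : 0 < k) (hc : 0 < c) (hr0 : r0 < 0)
    (hL : L = 2 * Real.pi / k)
    (ξ : ℝ → ℝ) (hξc : Continuous ξ) (hper : Function.Periodic ξ L)
    (hξ : ∀ q, ξ q ≤ k * r0)
    (hc0 : 0 < c0) (hc0' : c0 < c * Real.exp (2 * k * r0)) :
    -(c / L) * (∫ q in (0:ℝ)..L, Real.exp (2 * ξ q))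
      - (c0 / L) * (∫ q in (0:ℝ)..L, (1 - Real.exp (2 * ξ q)) /
          (1 + Real.exp (ξ q) * Real.cos (k * (q - c * t))))
    ∈ Set.Ioo (-(c * (1 - Real.exp (3 * k * r0)) / (1 - Real.exp (k * r0)))) 0 := by
  have hkr0 : k * r0 < 0 := mul_neg_of_pos_of_neg hk hr0
  have hc0_lt : c0 < c := hc0'.trans (mul_lt_of_lt_one_right hc (exp_lt_one_iff.mpr (by linarith)))
  simpa only [mul_assoc] using stmt9_general (hL ▸ by positivity) hξc.aemeasurable
    (by fun_prop : AEMeasurable (fun q => k * (q - c * t)) _) hkr0 (.of_forall hξ) hc0.le hc0_lt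
end

section
/- Fix k > 0, c > 0, and let L = 2π/k. Let ξ : ℝ → ℝ be continuous and L-periodic with ξ(q) < 0 for all q, and let θ(q) = k(q − c·t) for a fixed t. Suppose c0 ≤ 0 satisfies c0 > −c · min_{q ∈ [0,L]} [ e^{2ξ(q)}·(1 − e^{ξ(q)}) / (1 − e^{2ξ(q)}) ]. Then the mean Eulerian velocity ⟨u⟩_E := −(c/L)·∫₀^L e^{2ξ(q)} dq − (c0/L)·∫₀^L (1 − e^{2ξ(q)}) / (1 + e^{ξ(q)}·cos θ(q)) dq is strictly negative, i.e. the mean Eulerian flow is westwards. -/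
/-!
Write `r = e^ξ` and `J = (1 - r²) / (1 + r cos θ)`. Since `1 + r cos θ ≥ 1 - r > 0`, the factor `J`
is positive and `r² (1 - r) / (1 - r²) * J = r² (1 - r) / (1 + r cos θ) ≤ r²`. If `m` is the minimum
of `r² (1 - r) / (1 - r²)`, integration gives `m ∫ J ≤ ∫ r²`, so that
`c ∫ r² + c0 ∫ J ≥ (c m + c0) ∫ J > 0`; the mean velocity is the left-hand side times `-1 / L`.
-/

open Set

/-- The derivative `dx/dq` of the horizontal particle position with respect to the Lagrangian label
along a line of fixed depth, at orbital amplitude `r = e^ξ` and phase `θ`; it is the density with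
which the underlying current enters the mean Eulerian velocity. -/
noncomputable def fixedDepthJacobian (r θ : ℝ) : ℝ := (1 - r ^ 2) / (1 + r * Real.cos θ)

/-- The largest strength of a following current, relative to the phase speed, for which the current
does not outweigh the wave at orbital amplitude `r = e^ξ`, whatever the phase. At `r = ±1` the
quotient takes the junk value `0`. -/
noncomputable def followingCurrentThreshold (r : ℝ) : ℝ := r ^ 2 * (1 - r) / (1 - r ^ 2)

lemma exp_two_mul_eq_sq (x : ℝ) : Real.exp (2 * x) = Real.exp x ^ 2 := by
  exact_mod_cast Real.exp_nat_mul x 2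

section Pointwise

variable {r : ℝ}

lemma abs_lt_one_of_mem_Ico (hr : r ∈ Ico 0 1) : |r| < 1 := by
  rw [abs_of_nonneg hr.1]
  exact hr.2

lemma one_sub_abs_le_one_add_mul_cos (r θ : ℝ) : 1 - |r| ≤ 1 + r * Real.cos θ := by
  have h : |r * Real.cos θ| ≤ |r| := by
    rw [abs_mul]
    exact mul_le_of_le_one_right (abs_nonneg r) (Real.abs_cos_le_one θ)
  linarith [neg_le_of_abs_le h]

lemma one_add_mul_cos_pos (hr : |r| < 1) (θ : ℝ) : 0 < 1 + r * Real.cos θ :=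
  (sub_pos.mpr hr).trans_le (one_sub_abs_le_one_add_mul_cos r θ)

lemma fixedDepthJacobian_pos (hr : |r| < 1) (θ : ℝ) : 0 < fixedDepthJacobian r θ :=
  div_pos (sub_pos.mpr ((sq_lt_one_iff_abs_lt_one r).mpr hr)) (one_add_mul_cos_pos hr θ)

lemma followingCurrentThreshold_nonneg (hr : |r| ≤ 1) : 0 ≤ followingCurrentThreshold r :=
  div_nonneg (mul_nonneg (sq_nonneg r) (sub_nonneg.mpr (le_of_abs_le hr)))
    (sub_nonneg.mpr ((sq_le_one_iff_abs_le_one r).mpr hr))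

lemma followingCurrentThreshold_mul_fixedDepthJacobian_le (hr : r ∈ Ico 0 1) (θ : ℝ) :
    followingCurrentThreshold r * fixedDepthJacobian r θ ≤ r ^ 2 := by
  have habs : |r| < 1 := abs_lt_one_of_mem_Ico hr
  have hsq : 1 - r ^ 2 ≠ 0 := (sub_pos.mpr ((sq_lt_one_iff_abs_lt_one r).mpr habs)).ne'
  have hle : 1 - r ≤ 1 + r * Real.cos θ := by
    simpa only [abs_of_nonneg hr.1] using one_sub_abs_le_one_add_mul_cos r θ
  calc followingCurrentThreshold r * fixedDepthJacobian r θ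
      = r ^ 2 * (1 - r) / (1 + r * Real.cos θ) := div_mul_div_cancel₀ hsq
    _ ≤ r ^ 2 := div_le_of_le_mul₀ (one_add_mul_cos_pos habs θ).le (sq_nonneg r)
        (mul_le_mul_of_nonneg_left hle (sq_nonneg r))

end Pointwise

section Integral

variable {a b : ℝ} {r θ : ℝ → ℝ}

lemma continuousOn_fixedDepthJacobian {s : Set ℝ} (hrc : ContinuousOn r s)
    (hθ : ContinuousOn θ s) (hr : ∀ q ∈ s, |r q| < 1) :
    ContinuousOn (fun q ↦ fixedDepthJacobian (r q) (θ q)) s :=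
  ContinuousOn.div (by fun_prop) (by fun_prop) fun q hq ↦ (one_add_mul_cos_pos (hr q hq) _).ne'

lemma integral_fixedDepthJacobian_pos (hab : a < b) (hrc : ContinuousOn r (Icc a b))
    (hθ : ContinuousOn θ (Icc a b)) (hr : ∀ q ∈ Icc a b, |r q| < 1) :
    0 < ∫ q in a..b, fixedDepthJacobian (r q) (θ q) :=
  intervalIntegral.intervalIntegral_pos_of_pos_on
    ((continuousOn_fixedDepthJacobian hrc hθ hr).intervalIntegrable_of_Icc hab.le)
    (fun q hq ↦ fixedDepthJacobian_pos (hr q (Ioo_subset_Icc_self hq)) _) hab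

lemma sInf_followingCurrentThreshold_mul_integral_le (hab : a ≤ b)
    (hrc : ContinuousOn r (Icc a b)) (hθ : ContinuousOn θ (Icc a b))
    (hr : ∀ q ∈ Icc a b, r q ∈ Ico 0 1) :
    sInf ((fun q ↦ followingCurrentThreshold (r q)) '' Icc a b) *
      (∫ q in a..b, fixedDepthJacobian (r q) (θ q)) ≤ ∫ q in a..b, r q ^ 2 := by
  have habs : ∀ q ∈ Icc a b, |r q| < 1 := fun q hq ↦ abs_lt_one_of_mem_Ico (hr q hq)
  have hbdd : BddBelow ((fun q ↦ followingCurrentThreshold (r q)) '' Icc a b) :=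
    ⟨0, forall_mem_image.mpr fun q hq ↦ followingCurrentThreshold_nonneg (habs q hq).le⟩
  have hJ : IntervalIntegrable (fun q ↦ fixedDepthJacobian (r q) (θ q)) MeasureTheory.volume a b :=
    (continuousOn_fixedDepthJacobian hrc hθ habs).intervalIntegrable_of_Icc hab
  rw [← intervalIntegral.integral_const_mul]
  refine intervalIntegral.integral_mono_on hab (hJ.const_mul _)
    ((hrc.pow 2).intervalIntegrable_of_Icc hab) fun q hq ↦ ?_
  calc sInf ((fun q ↦ followingCurrentThreshold (r q)) '' Icc a b) *
        fixedDepthJacobian (r q) (θ q)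
      ≤ followingCurrentThreshold (r q) * fixedDepthJacobian (r q) (θ q) :=
        mul_le_mul_of_nonneg_right (csInf_le hbdd (mem_image_of_mem _ hq))
          (fixedDepthJacobian_pos (habs q hq) _).le
    _ ≤ r q ^ 2 := followingCurrentThreshold_mul_fixedDepthJacobian_le (hr q hq) _

end Integral

theorem stmt10_general {c c0 L : ℝ} {r θ : ℝ → ℝ} (hc : 0 ≤ c) (hL : 0 < L)
    (hrc : ContinuousOn r (Icc 0 L)) (hθ : ContinuousOn θ (Icc 0 L))
    (hr : ∀ q ∈ Icc 0 L, r q ∈ Ico 0 1)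
    (hmin : -c * sInf ((fun q ↦ followingCurrentThreshold (r q)) '' Icc 0 L) < c0) :
    -(c / L) * (∫ q in (0 : ℝ)..L, r q ^ 2)
      - (c0 / L) * (∫ q in (0 : ℝ)..L, fixedDepthJacobian (r q) (θ q)) < 0 := by
  set m := sInf ((fun q ↦ followingCurrentThreshold (r q)) '' Icc 0 L)
  set J := ∫ q in (0 : ℝ)..L, fixedDepthJacobian (r q) (θ q)
  set I := ∫ q in (0 : ℝ)..L, r q ^ 2
  have hJ : 0 < J := integral_fixedDepthJacobian_pos hL hrc hθ fun q hq ↦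
    abs_lt_one_of_mem_Ico (hr q hq)
  have hmJ : m * J ≤ I := sInf_followingCurrentThreshold_mul_integral_le hL.le hrc hθ hr
  have hpos : 0 < c * I + c0 * J :=
    calc 0 < (c * m + c0) * J := mul_pos (by linarith) hJ
      _ = c * (m * J) + c0 * J := by ring
      _ ≤ c * I + c0 * J := by gcongr
  calc -(c / L) * I - c0 / L * J = -((c * I + c0 * J) / L) := by ring
    _ < 0 := neg_neg_of_pos (div_pos hpos hL)

/-- For a following (or zero) current `c0 ≤ 0` satisfying
`c0 > −c · min_{q ∈ [0,L]} e^{2ξ}(1 − e^{ξ})/(1 − e^{2ξ})`, the mean Eulerian flow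
velocity is strictly negative (westwards). -/
theorem stmt10 (k c c0 t L : ℝ) (hk : 0 < k) (hc : 0 < c) (hL : L = 2 * Real.pi / k)
    (ξ : ℝ → ℝ) (hξc : Continuous ξ) (hper : Function.Periodic ξ L) (hξ : ∀ q, ξ q < 0)
    (hc0 : c0 ≤ 0)
    (hmin : c0 > -c * sInf ((fun q => Real.exp (2 * ξ q) * (1 - Real.exp (ξ q)) /
        (1 - Real.exp (2 * ξ q))) '' Set.Icc 0 L)) :
    -(c / L) * (∫ q in (0:ℝ)..L, Real.exp (2 * ξ q))
      - (c0 / L) * (∫ q in (0:ℝ)..L, (1 - Real.exp (2 * ξ q)) /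
          (1 + Real.exp (ξ q) * Real.cos (k * (q - c * t)))) < 0 := by
  simp only [exp_two_mul_eq_sq] at hmin ⊢
  exact stmt10_general hc.le (hL ▸ div_pos Real.two_pi_pos hk) hξc.rexp.continuousOn (by fun_prop)
    (fun q _ ↦ ⟨(Real.exp_pos _).le, Real.exp_lt_one_iff.mpr (hξ q)⟩) hmin
end

section
/- Fix k > 0, c > 0, and let L = 2π/k. Let ξ : ℝ → ℝ be continuous and L-periodic with ξ(q) < 0 for all q, and let θ(q) = k(q − c·t) for a fixed t. Suppose c0 < 0 satisfies c0 < −c · max_{q ∈ [0,L]} [ e^{2ξ(q)}·(1 + e^{ξ(q)}) / (1 − e^{2ξ(q)}) ]. Then the mean Eulerian velocity ⟨u⟩_E := −(c/L)·∫₀^L e^{2ξ(q)} dq − (c0/L)·∫₀^L (1 − e^{2ξ(q)}) / (1 + e^{ξ(q)}·cos θ(q)) dq is strictly positive, i.e. the mean Eulerian flow is eastwards. -/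
/-!
Write `r = e^ξ ∈ (0, 1)`. Cancelling `1 + r` shows that the critical ratio
`r² (1 + r) / (1 - r²)` is `r² / (1 - r)`, while `(1 - r²) / (1 + r cos θ)` is at least
`1 - r`, its value at `cos θ = 1`. The bound on the current therefore reads
`c r² < -c0 (1 - r)`, which already gives `c r² < -c0 (1 - r²) / (1 + r cos θ)` for every phase.
Integrating this pointwise inequality over the wavelength yields the positivity of the mean flow.
-/

open Set

section Pointwise

variable {r x c d : ℝ}

lemma one_add_mul_pos_of_abs_le_one (hr : |r| < 1) (hx : |x| ≤ 1) : 0 < 1 + r * x := by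
  have hrx : |r * x| < 1 := by
    rw [abs_mul]
    exact (mul_le_of_le_one_right (abs_nonneg r) hx).trans_lt hr
  linarith [(abs_lt.mp hrx).1]

lemma one_sub_le_one_sub_sq_div (hr₀ : 0 ≤ r) (hr₁ : r < 1) (hx : |x| ≤ 1) :
    1 - r ≤ (1 - r ^ 2) / (1 + r * x) := by
  have hden : 0 < 1 + r * x := one_add_mul_pos_of_abs_le_one ((abs_of_nonneg hr₀).trans_lt hr₁) hx
  have hmax : 1 + r * x ≤ 1 + r := by
    gcongr
    exact mul_le_of_le_one_right hr₀ (le_of_abs_le hx)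
  rw [le_div_iff₀ hden]
  calc (1 - r) * (1 + r * x) ≤ (1 - r) * (1 + r) :=
        mul_le_mul_of_nonneg_left hmax (sub_nonneg.mpr hr₁.le)
    _ = 1 - r ^ 2 := by ring

lemma sq_mul_one_add_div_one_sub_sq (hr : 1 + r ≠ 0) :
    r ^ 2 * (1 + r) / (1 - r ^ 2) = r ^ 2 / (1 - r) := by
  rw [show 1 - r ^ 2 = (1 - r) * (1 + r) by ring, mul_div_mul_right _ _ hr]

lemma mul_sq_lt_mul_one_sub_sq_div (hr₀ : 0 ≤ r) (hr₁ : r < 1) (hx : |x| ≤ 1) (hc : 0 ≤ c)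
    (h : c * (r ^ 2 * (1 + r) / (1 - r ^ 2)) < d) :
    c * r ^ 2 < d * ((1 - r ^ 2) / (1 + r * x)) := by
  have hr : 0 < 1 - r := sub_pos.mpr hr₁
  rw [sq_mul_one_add_div_one_sub_sq (by positivity)] at h
  have hd : 0 < d := lt_of_le_of_lt (by positivity) h
  calc c * r ^ 2 < d * (1 - r) := by rwa [← mul_div_assoc, div_lt_iff₀ hr] at h
    _ ≤ d * ((1 - r ^ 2) / (1 + r * x)) :=
      mul_le_mul_of_nonneg_left (one_sub_le_one_sub_sq_div hr₀ hr₁ hx) hd.le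

end Pointwise

lemma mul_lt_of_mul_sSup_lt {s : Set ℝ} {a c d : ℝ} (hs : BddAbove s) (hc : 0 ≤ c)
    (h : c * sSup s < d) (ha : a ∈ s) : c * a < d :=
  (mul_le_mul_of_nonneg_left (le_csSup hs ha) hc).trans_lt h

lemma mul_integral_sq_lt_mul_integral_div {a b c d : ℝ} {ρ χ : ℝ → ℝ} (hab : a < b)
    (hρ : ContinuousOn ρ (Icc a b)) (hχ : ContinuousOn χ (Icc a b))
    (hρ₀ : ∀ q ∈ Icc a b, 0 ≤ ρ q) (hρ₁ : ∀ q ∈ Icc a b, ρ q < 1)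
    (hχ₁ : ∀ q ∈ Icc a b, |χ q| ≤ 1) (hc : 0 ≤ c)
    (h : c * sSup ((fun q ↦ ρ q ^ 2 * (1 + ρ q) / (1 - ρ q ^ 2)) '' Icc a b) < d) :
    c * ∫ q in a..b, ρ q ^ 2 < d * ∫ q in a..b, (1 - ρ q ^ 2) / (1 + ρ q * χ q) := by
  have hratio : ContinuousOn (fun q ↦ ρ q ^ 2 * (1 + ρ q) / (1 - ρ q ^ 2)) (Icc a b) :=
    ContinuousOn.div (by fun_prop) (by fun_prop) fun q hq ↦
      (sub_pos.mpr (pow_lt_one₀ (hρ₀ q hq) (hρ₁ q hq) two_ne_zero)).ne'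
  have hquot : ContinuousOn (fun q ↦ (1 - ρ q ^ 2) / (1 + ρ q * χ q)) (Icc a b) :=
    ContinuousOn.div (by fun_prop) (by fun_prop) fun q hq ↦
      (one_add_mul_pos_of_abs_le_one
        ((abs_of_nonneg (hρ₀ q hq)).trans_lt (hρ₁ q hq)) (hχ₁ q hq)).ne'
  have hlt : ∀ q ∈ Icc a b, c * ρ q ^ 2 < d * ((1 - ρ q ^ 2) / (1 + ρ q * χ q)) := fun q hq ↦
    mul_sq_lt_mul_one_sub_sq_div (hρ₀ q hq) (hρ₁ q hq) (hχ₁ q hq) hc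
      (mul_lt_of_mul_sSup_lt (isCompact_Icc.bddAbove_image hratio) hc h (mem_image_of_mem _ hq))
  rw [← intervalIntegral.integral_const_mul, ← intervalIntegral.integral_const_mul]
  exact intervalIntegral.integral_lt_integral_of_continuousOn_of_le_of_exists_lt hab
    (by fun_prop) (by fun_prop) (fun q hq ↦ (hlt q (Ioc_subset_Icc_self hq)).le)
    ⟨a, left_mem_Icc.mpr hab.le, hlt a (left_mem_Icc.mpr hab.le)⟩

theorem stmt11_general {c c0 L : ℝ} {ξ θ : ℝ → ℝ} (hL : 0 < L) (hc : 0 ≤ c)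
    (hξc : ContinuousOn ξ (Icc 0 L)) (hθc : ContinuousOn θ (Icc 0 L))
    (hξ : ∀ q ∈ Icc 0 L, ξ q < 0)
    (hmax : c0 < -c * sSup ((fun q ↦ Real.exp (2 * ξ q) * (1 + Real.exp (ξ q)) /
        (1 - Real.exp (2 * ξ q))) '' Icc 0 L)) :
    0 < -(c / L) * (∫ q in (0 : ℝ)..L, Real.exp (2 * ξ q))
      - (c0 / L) * (∫ q in (0 : ℝ)..L, (1 - Real.exp (2 * ξ q)) /
          (1 + Real.exp (ξ q) * Real.cos (θ q))) := by
  have hexp (y : ℝ) : Real.exp (2 * y) = Real.exp y ^ 2 := mod_cast Real.exp_nat_mul y 2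
  simp only [hexp] at hmax ⊢
  have hint := mul_integral_sq_lt_mul_integral_div (χ := fun q ↦ Real.cos (θ q)) (d := -c0) hL
    hξc.rexp (by fun_prop) (fun _ _ ↦ (Real.exp_pos _).le)
    (fun q hq ↦ Real.exp_lt_one_iff.mpr (hξ q hq)) (fun _ _ ↦ Real.abs_cos_le_one _) hc
    (by linarith)
  linear_combination div_pos (sub_pos.mpr hint) hL

/-- For a following current `c0 < 0` satisfying
`c0 < −c · max_{q ∈ [0,L]} e^{2ξ}(1 + e^{ξ})/(1 − e^{2ξ})`, the mean Eulerian flow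
velocity is strictly positive (eastwards). -/
theorem stmt11 (k c c0 t L : ℝ) (hk : 0 < k) (hc : 0 < c) (hL : L = 2 * Real.pi / k)
    (ξ : ℝ → ℝ) (hξc : Continuous ξ) (hper : Function.Periodic ξ L) (hξ : ∀ q, ξ q < 0)
    (hc0 : c0 < 0)
    (hmax : c0 < -c * sSup ((fun q => Real.exp (2 * ξ q) * (1 + Real.exp (ξ q)) /
        (1 - Real.exp (2 * ξ q))) '' Set.Icc 0 L)) :
    0 < -(c / L) * (∫ q in (0:ℝ)..L, Real.exp (2 * ξ q))
      - (c0 / L) * (∫ q in (0:ℝ)..L, (1 - Real.exp (2 * ξ q)) /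
          (1 + Real.exp (ξ q) * Real.cos (k * (q - c * t)))) :=
  stmt11_general (hL ▸ div_pos Real.two_pi_pos hk) hc.le hξc.continuousOn (by fun_prop)
    (fun q _ ↦ hξ q) hmax
end
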